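/- Let (γ,ν) : [a,b] → ℝ² × S¹ be a closed Legendre curve with curvature (ℓ,β) such that γ is a simple closed frontal and the zeros of ℓ and of β are isolated points. Then γ is convex if and only if one of the following four conditions holds: (i) ℓ(t) ≥ 0 and β(t) ≥ 0 for all t; (ii) ℓ(t) ≥ 0 and β(t) ≤ 0 for all t; (iii) ℓ(t) ≤ 0 and β(t) ≤ 0 for all t; (iv) ℓ(t) ≤ 0 and β(t) ≥ 0 for all t. -/

import Mathlib

/-!
A Legendre curve has a global angle function `θ` with `ν = (sin θ, -cos θ)`, so that
`μ = (cos θ, sin θ)`, `θ' = ℓ` and `γ' = β μ`. Everything is read off from the function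
`sideFn s t = (γ s - γ t) · ν t`, whose derivative in `s` is `-β s * sin (θ s - θ t)`.

If `γ` is convex, two tangent lines with the same normal coincide, and an extremality argument in
`t` shows that `ℓ t = 0` as soon as the value `θ t` is repeated at another point
(`ell_eq_zero_of_theta_eq`). As the zeros of `ℓ` are isolated, `θ` is injective on the open
interval (`theta_injOn`), hence strictly monotone, so `ℓ` has constant sign. The sign of `sideFn`
just after `t` then determines the sign of `β t` (`beta_nonpos`).

Conversely, let `ℓ` and `β` have constant signs; symmetries of the plane reduce to `β, ℓ ≥ 0`.
Hopf's Umlaufsatz (`umlaufsatz`) remains valid for a simple closed frontal with `β ≥ 0`: the arc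
length `∫ β` is strictly increasing, and the chords divided by the lengths of the arcs they cut off
extend continuously to the tangent directions. So the monotone function `θ` increases by exactly
`2π`, and for fixed `t` the function `sideFn · t` first decreases from `0` and then returns to `0`
(`sideFn_nonpos`), which is convexity. Without the Umlaufsatz one would only know that the total
turning is a multiple of `2π`, and a curve winding several times need not be convex.
-/

open Real Set

noncomputable section

/-- The Euclidean inner product on the plane `ℝ²`. -/
def dot (p q : ℝ × ℝ) : ℝ := p.1 * q.1 + p.2 * q.2

/-- The Euclidean norm on the plane `ℝ²`. -/
def nrm (p : ℝ × ℝ) : ℝ := Real.sqrt (p.1 ^ 2 + p.2 ^ 2)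

/-- Counterclockwise rotation `J` by `π/2` on `ℝ²`. -/
def Jrot (p : ℝ × ℝ) : ℝ × ℝ := (-p.2, p.1)

/-- `(γ, ν)` is a Legendre curve on `I` : both maps are smooth, `ν` is `S¹`-valued,
and `γ'(t) · ν(t) = 0` for all `t ∈ I`. -/
structure IsLegendreCurve (γ ν : ℝ → ℝ × ℝ) (I : Set ℝ) : Prop where
  smooth_base : ContDiff ℝ (⊤ : ℕ∞) γ
  smooth_normal : ContDiff ℝ (⊤ : ℕ∞) ν
  unit_normal : ∀ t, nrm (ν t) = 1
  tangent : ∀ t ∈ I, dot (deriv γ t) (ν t) = 0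

/-- The first curvature function `ℓ = ν' · μ` of a Legendre curve, where `μ = J(ν)`. -/
def ellOf (ν : ℝ → ℝ × ℝ) (t : ℝ) : ℝ := dot (deriv ν t) (Jrot (ν t))

/-- The second curvature function `β = γ' · μ` of a Legendre curve, where `μ = J(ν)`. -/
def betOf (γ ν : ℝ → ℝ × ℝ) (t : ℝ) : ℝ := dot (deriv γ t) (Jrot (ν t))

/-- `(ℓ, β)` is the curvature of the Legendre curve `(γ, ν)` on `I`. -/
def IsCurvature (γ ν : ℝ → ℝ × ℝ) (ℓ β : ℝ → ℝ) (I : Set ℝ) : Prop :=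
  ContDiff ℝ (⊤ : ℕ∞) ℓ ∧ ContDiff ℝ (⊤ : ℕ∞) β ∧ ∀ t ∈ I, ℓ t = ellOf ν t ∧ β t = betOf γ ν t

/-- A Legendre curve on `[a,b]` is closed: `γ, ν, γ', ν'` take the same values at `a` and `b`. -/
def IsClosedLegendreCurve (γ ν : ℝ → ℝ × ℝ) (a b : ℝ) : Prop :=
  γ a = γ b ∧ ν a = ν b ∧ deriv γ a = deriv γ b ∧ deriv ν a = deriv ν b

/-- `γ` is simple closed on `[a,b]`. -/
def IsSimpleClosed (γ : ℝ → ℝ × ℝ) (a b : ℝ) : Prop :=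
  ∀ t₁ t₂, a ≤ t₁ → t₁ < t₂ → t₂ ≤ b → γ t₁ = γ t₂ → t₁ = a ∧ t₂ = b

/-- `γ` is a convex frontal on `I` : its image lies on one side of every tangent line. -/
def IsConvexFrontal (γ ν : ℝ → ℝ × ℝ) (I : Set ℝ) : Prop :=
  (∀ s ∈ I, ∀ t ∈ I, 0 ≤ dot (γ s - γ t) (ν t)) ∨
  (∀ s ∈ I, ∀ t ∈ I, dot (γ s - γ t) (ν t) ≤ 0)

/-- The zeros of `f` in `I` are isolated points. -/
def HasIsolatedZerosOn (f : ℝ → ℝ) (I : Set ℝ) : Prop :=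
  ∀ t ∈ I, f t = 0 → ∃ ε > 0, ∀ s ∈ I, s ≠ t → |s - t| < ε → f s ≠ 0

/-- There are at least four distinct points of `s` satisfying `P`. -/
def FourPoints (P : ℝ → Prop) (s : Set ℝ) : Prop :=
  ∃ t₁ t₂ t₃ t₄, t₁ ∈ s ∧ t₂ ∈ s ∧ t₃ ∈ s ∧ t₄ ∈ s ∧
    t₁ ≠ t₂ ∧ t₁ ≠ t₃ ∧ t₁ ≠ t₄ ∧ t₂ ≠ t₃ ∧ t₂ ≠ t₄ ∧ t₃ ≠ t₄ ∧
    P t₁ ∧ P t₂ ∧ P t₃ ∧ P t₄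

/-- `(γ, ν)` has a point of type `(n, m)` (with `m = n + k`) at `t₀`, with defining function
`f` : after a smooth parameter change sending `t₀` to `0`, the germ of `(γ, ν)` at `t₀` equals
the germ at `0` of the normal form of type `(n, n + k)`. -/
def PointOfType (γ ν : ℝ → ℝ × ℝ) (t₀ : ℝ) (n k : ℕ) (f : ℝ → ℝ) : Prop :=
  1 ≤ n ∧ 1 ≤ k ∧ ContDiff ℝ (⊤ : ℕ∞) f ∧ f 0 ≠ 0 ∧
  ∃ s : ℝ, (s = 1 ∨ s = -1) ∧
  ∃ φ : ℝ → ℝ, ContDiff ℝ (⊤ : ℕ∞) φ ∧ φ t₀ = 0 ∧ deriv φ t₀ ≠ 0 ∧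
  ∃ ε : ℝ, 0 < ε ∧ ∀ u : ℝ, |u - t₀| < ε →
    γ u = (s * φ u ^ n, φ u ^ (n + k) * f (φ u)) ∧
    ν u = ((-((n + k : ℕ) : ℝ) * φ u ^ k * f (φ u) - φ u ^ (k + 1) * deriv f (φ u)) /
        Real.sqrt ((((n + k : ℕ) : ℝ) * φ u ^ k * f (φ u) + φ u ^ (k + 1) * deriv f (φ u)) ^ 2
          + (n : ℝ) ^ 2),
      s * (n : ℝ) /
        Real.sqrt ((((n + k : ℕ) : ℝ) * φ u ^ k * f (φ u) + φ u ^ (k + 1) * deriv f (φ u)) ^ 2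
          + (n : ℝ) ^ 2))

/-- Partial derivative in the first variable. -/
def pdx (f : ℝ × ℝ → ℝ) (p : ℝ × ℝ) : ℝ := deriv (fun x => f (x, p.2)) p.1

/-- Partial derivative in the second variable. -/
def pdy (f : ℝ × ℝ → ℝ) (p : ℝ × ℝ) : ℝ := deriv (fun y => f (p.1, y)) p.2


/-! ### Curves given by a tangent angle -/

/-- On `[a, b]` the curve `(x, y)` has velocity `β (cos θ, sin θ)`, where `β` may vanish or change
sign, and the angle `θ` has derivative `ℓ`. The functions `β`, `ℓ`, `θ` are controlled on the
whole line, which spares one-sided arguments at the endpoints. -/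
structure PlaneFrame (a b : ℝ) (x y β ℓ θ : ℝ → ℝ) : Prop where
  cont_beta : Continuous β
  cont_ell : Continuous ℓ
  deriv_x : ∀ t ∈ Icc a b, HasDerivAt x (β t * cos (θ t)) t
  deriv_y : ∀ t ∈ Icc a b, HasDerivAt y (β t * sin (θ t)) t
  deriv_theta : ∀ t, HasDerivAt θ (ℓ t) t

/-- The position of the point with parameter `s` relative to the tangent line at `t`: the inner
product of their difference with the normal `(sin θ, -cos θ)` at `t`. -/
def sideFn (x y θ : ℝ → ℝ) (s t : ℝ) : ℝ :=
  (x s - x t) * sin (θ t) - (y s - y t) * cos (θ t)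

namespace PlaneFrame

variable {a b : ℝ} {x y β ℓ θ : ℝ → ℝ}

/-- The half-turn of a plane frame: the angle is kept and `β` changes sign. -/
lemma neg (h : PlaneFrame a b x y β ℓ θ) : PlaneFrame a b (-x) (-y) (-β) ℓ θ where
  cont_beta := h.cont_beta.neg
  cont_ell := h.cont_ell
  deriv_x t ht := by simpa using (h.deriv_x t ht).neg
  deriv_y t ht := by simpa using (h.deriv_y t ht).neg
  deriv_theta := h.deriv_theta

/-- The reflection of a plane frame in the first axis: `ℓ` changes sign and `β` is kept. -/
lemma conj (h : PlaneFrame a b x y β ℓ θ) : PlaneFrame a b x (-y) β (-ℓ) (-θ) where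
  cont_beta := h.cont_beta
  cont_ell := h.cont_ell.neg
  deriv_x t ht := by simpa using h.deriv_x t ht
  deriv_y t ht := by simpa using (h.deriv_y t ht).neg
  deriv_theta t := (h.deriv_theta t).neg

lemma sideFn_neg (s t : ℝ) : sideFn (-x) (-y) θ s t = -sideFn x y θ s t := by
  simp only [sideFn, Pi.neg_apply]; ring

lemma sideFn_conj (s t : ℝ) : sideFn x (-y) (-θ) s t = -sideFn x y θ s t := by
  simp only [sideFn, Pi.neg_apply, sin_neg, cos_neg]; ring

lemma cont_theta (h : PlaneFrame a b x y β ℓ θ) : Continuous θ :=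
  continuous_iff_continuousAt.2 fun t => (h.deriv_theta t).continuousAt

lemma hasDerivAt_sideFn_left (h : PlaneFrame a b x y β ℓ θ) {s : ℝ} (hs : s ∈ Icc a b) (t : ℝ) :
    HasDerivAt (fun s => sideFn x y θ s t) (-(β s * sin (θ s - θ t))) s := by
  have h1 := (((h.deriv_x s hs).sub_const (x t)).mul_const (sin (θ t))).sub
    (((h.deriv_y s hs).sub_const (y t)).mul_const (cos (θ t)))
  exact h1.congr_deriv (by rw [sin_sub]; ring)

lemma hasDerivAt_sideFn_right (h : PlaneFrame a b x y β ℓ θ) {t : ℝ} (ht : t ∈ Icc a b) (s : ℝ) :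
    HasDerivAt (fun t => sideFn x y θ s t)
      (ℓ t * ((x s - x t) * cos (θ t) + (y s - y t) * sin (θ t))) t := by
  have h1 := (((h.deriv_x t ht).const_sub (x s)).mul (h.deriv_theta t).sin).sub
    (((h.deriv_y t ht).const_sub (y s)).mul (h.deriv_theta t).cos)
  exact h1.congr_deriv (by ring)

/-- If `β, ℓ ≥ 0` and the tangent turns by exactly `2π`, the closed curve lies on the nonpositive
side of each tangent. As a function of `s`, the derivative of `sideFn s t` is
`-β s * sin (θ s - θ t)`; since `θ` is monotone with total variation `2π`, on the circle this
function decreases from `0` at `t` up to the opposite angle and then increases back to `0`. -/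
lemma sideFn_nonpos (h : PlaneFrame a b x y β ℓ θ) (hab : a < b)
    (hx : x a = x b) (hy : y a = y b) (hβ : ∀ t ∈ Icc a b, 0 ≤ β t)
    (hℓ : ∀ t ∈ Icc a b, 0 ≤ ℓ t) (htot : θ b = θ a + 2 * π) :
    ∀ s ∈ Icc a b, ∀ t ∈ Icc a b, sideFn x y θ s t ≤ 0 := by
  intro s hs t ht
  have hθ : MonotoneOn θ (Icc a b) :=
    monotoneOn_of_hasDerivWithinAt_nonneg (convex_Icc a b) h.cont_theta.continuousOn
      (fun u _ => (h.deriv_theta u).hasDerivWithinAt) (fun u hu => hℓ u (interior_subset hu))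
  set f : ℝ → ℝ := fun s => sideFn x y θ s t with hf
  have hft : f t = 0 := by simp [hf, sideFn]
  have hfab : f a = f b := by simp [hf, sideFn, hx, hy]
  have hA : a ∈ Icc a b := left_mem_Icc.2 hab.le
  have hB : b ∈ Icc a b := right_mem_Icc.2 hab.le
  have hcont : ContinuousOn f (Icc a b) := fun u hu =>
    (h.hasDerivAt_sideFn_left hu t).continuousAt.continuousWithinAt
  have anti : ∀ p q, p ∈ Icc a b → q ∈ Icc a b →
      (∀ u ∈ Icc p q, 0 ≤ sin (θ u - θ t)) → p ≤ q → f q ≤ f p := by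
    intro p q hp hq hsin hpq
    have hsub : Icc p q ⊆ Icc a b := Icc_subset_Icc hp.1 hq.2
    refine antitoneOn_of_hasDerivWithinAt_nonpos (convex_Icc p q) (hcont.mono hsub)
      (fun u hu => (h.hasDerivAt_sideFn_left (hsub (interior_subset hu)) t).hasDerivWithinAt)
      (fun u hu => ?_) (left_mem_Icc.2 hpq) (right_mem_Icc.2 hpq) hpq
    have := mul_nonneg (hβ u (hsub (interior_subset hu))) (hsin u (interior_subset hu))
    linarith
  have mono : ∀ p q, p ∈ Icc a b → q ∈ Icc a b →
      (∀ u ∈ Icc p q, sin (θ u - θ t) ≤ 0) → p ≤ q → f p ≤ f q := by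
    intro p q hp hq hsin hpq
    have hsub : Icc p q ⊆ Icc a b := Icc_subset_Icc hp.1 hq.2
    refine monotoneOn_of_hasDerivWithinAt_nonneg (convex_Icc p q) (hcont.mono hsub)
      (fun u hu => (h.hasDerivAt_sideFn_left (hsub (interior_subset hu)) t).hasDerivWithinAt)
      (fun u hu => ?_) (left_mem_Icc.2 hpq) (right_mem_Icc.2 hpq) hpq
    have := mul_nonneg (hβ u (hsub (interior_subset hu)))
      (neg_nonneg.2 (hsin u (interior_subset hu)))
    linarith
  -- the angle relative to `t` stays in `[-2π, 2π]`, and its range has length `2π`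
  have hpos : ∀ p q, p ∈ Icc a b → q ∈ Icc a b → θ t ≤ θ p → θ q ≤ θ t + π →
      ∀ u ∈ Icc p q, 0 ≤ sin (θ u - θ t) := by
    intro p q hp hq h1 h2 u hu
    have hu' : u ∈ Icc a b := ⟨hp.1.trans hu.1, hu.2.trans hq.2⟩
    have := hθ hp hu' hu.1
    have := hθ hu' hq hu.2
    exact sin_nonneg_of_nonneg_of_le_pi (by linarith) (by linarith)
  have hneg : ∀ p q, p ∈ Icc a b → q ∈ Icc a b → θ t - π ≤ θ p → θ q ≤ θ t →
      ∀ u ∈ Icc p q, sin (θ u - θ t) ≤ 0 := by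
    intro p q hp hq h1 h2 u hu
    have hu' : u ∈ Icc a b := ⟨hp.1.trans hu.1, hu.2.trans hq.2⟩
    have := hθ hp hu' hu.1
    have := hθ hu' hq hu.2
    exact sin_nonpos_of_nonpos_of_neg_pi_le (by linarith) (by linarith)
  have hneg' : ∀ p q, p ∈ Icc a b → q ∈ Icc a b → θ t + π ≤ θ p →
      ∀ u ∈ Icc p q, sin (θ u - θ t) ≤ 0 := by
    intro p q hp hq h1 u hu
    have hu' : u ∈ Icc a b := ⟨hp.1.trans hu.1, hu.2.trans hq.2⟩
    have := hθ hp hu' hu.1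
    have := hθ hu' hB hu'.2
    have := hθ hA ht ht.1
    have := sin_nonpos_of_nonpos_of_neg_pi_le (x := θ u - θ t - 2 * π) (by linarith) (by linarith)
    rwa [sin_sub_two_pi] at this
  have hpos' : ∀ p q, p ∈ Icc a b → q ∈ Icc a b → θ q ≤ θ t - π →
      ∀ u ∈ Icc p q, 0 ≤ sin (θ u - θ t) := by
    intro p q hp hq h1 u hu
    have hu' : u ∈ Icc a b := ⟨hp.1.trans hu.1, hu.2.trans hq.2⟩
    have := hθ hu' hq hu.2
    have := hθ hA hu' hu'.1
    have := hθ ht hB ht.2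
    have := sin_nonneg_of_nonneg_of_le_pi (x := θ u - θ t + 2 * π) (by linarith) (by linarith)
    rwa [sin_add_two_pi] at this
  have hta := hθ hA ht ht.1
  have htb := hθ ht hB ht.2
  show f s ≤ 0
  rw [← hft]
  by_cases hcase : θ t + π ≤ θ b
  · -- `f` decreases from `t` until the opposite angle, then increases up to `b`;
    -- on `[a, t]` it increases
    have hat : ∀ p q, a ≤ p → p ≤ q → q ≤ t → f p ≤ f q := fun p q hp hpq hq =>
      mono p q ⟨hp, (hpq.trans hq).trans ht.2⟩ ⟨hp.trans hpq, hq.trans ht.2⟩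
        (hneg p q ⟨hp, (hpq.trans hq).trans ht.2⟩ ⟨hp.trans hpq, hq.trans ht.2⟩
          (by linarith [hθ hA (show p ∈ Icc a b from ⟨hp, (hpq.trans hq).trans ht.2⟩) hp])
          (hθ ⟨hp.trans hpq, hq.trans ht.2⟩ ht hq)) hpq
    rcases le_total s t with hst | hts
    · exact hat s t hs.1 hst le_rfl
    · by_cases h2 : θ s ≤ θ t + π
      · exact anti t s ht hs (hpos t s ht hs le_rfl h2) hts
      · have h3 := mono s b hs hB (hneg' s b hs hB (not_le.1 h2).le) hs.2
        have h4 := hat a t le_rfl ht.1 le_rfl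
        linarith
  · have hcase := not_le.1 hcase
    have htb' : ∀ p q, t ≤ p → p ≤ q → q ≤ b → f q ≤ f p := fun p q hp hpq hq =>
      anti p q ⟨ht.1.trans hp, hpq.trans hq⟩ ⟨ht.1.trans (hp.trans hpq), hq⟩
        (hpos p q ⟨ht.1.trans hp, hpq.trans hq⟩ ⟨ht.1.trans (hp.trans hpq), hq⟩
          (hθ ht ⟨ht.1.trans hp, hpq.trans hq⟩ hp)
          (by linarith [hθ (show q ∈ Icc a b from ⟨ht.1.trans (hp.trans hpq), hq⟩) hB hq])) hpq
    rcases le_total t s with hts | hst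
    · exact htb' t s le_rfl hts hs.2
    · by_cases h2 : θ t - π ≤ θ s
      · exact mono s t hs ht (hneg s t hs ht h2 le_rfl) hst
      · have h3 := anti a s hA hs (hpos' a s hA hs (not_le.1 h2).le) hs.1
        have h4 := htb' t b le_rfl ht.2 le_rfl
        linarith

/-- On a curve lying on the nonnegative side of its tangents, tangents at `s` and `t` with equal
angle coincide, so `sideFn s ·` has a minimum at `t`. If `ℓ t ≠ 0`, the vanishing derivative
forces the two points to coincide. -/
lemma ell_eq_zero_of_theta_eq (h : PlaneFrame a b x y β ℓ θ)
    (hconv : ∀ s ∈ Icc a b, ∀ t ∈ Icc a b, 0 ≤ sideFn x y θ s t)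
    {s t : ℝ} (hs : s ∈ Icc a b) (ht : t ∈ Ioo a b) (hst : x s ≠ x t ∨ y s ≠ y t)
    (hθ : θ s = θ t) : ℓ t = 0 := by
  have ht' := Ioo_subset_Icc_self ht
  have h0 : sideFn x y θ s t = 0 := by
    have h1 := hconv s hs t ht'
    have h2 := hconv t ht' s hs
    simp only [sideFn, hθ] at h1 h2 ⊢
    linarith
  have hmin : IsLocalMin (fun t => sideFn x y θ s t) t := by
    filter_upwards [Icc_mem_nhds ht.1 ht.2] with u hu
    rw [h0]; exact hconv s hs u hu
  have hd := hmin.hasDerivAt_eq_zero (h.hasDerivAt_sideFn_right ht' s)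
  by_contra hne
  have h1 := (mul_eq_zero.1 hd).resolve_left hne
  simp only [sideFn] at h0
  have hsc := sin_sq_add_cos_sq (θ t)
  have hX : x s - x t = 0 := by linear_combination sin (θ t) * h0 + cos (θ t) * h1 - (x s - x t) * hsc
  have hY : y s - y t = 0 := by linear_combination -cos (θ t) * h0 + sin (θ t) * h1 - (y s - y t) * hsc
  rcases hst with h2 | h2
  · exact h2 (sub_eq_zero.1 hX)
  · exact h2 (sub_eq_zero.1 hY)

end PlaneFrame

/-! ### Convexity forces constant signs -/

/-- If `θ` takes equal values at `u` and `v` and a larger one in between, then just to the right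
of a maximum all its values have been attained before. -/
lemma exists_interval_levels_attained_twice {θ : ℝ → ℝ} (hθ : Continuous θ) {u v : ℝ}
    (huv : θ u = θ v) {m : ℝ} (hm : m ∈ Icc u v) (hlt : θ u < θ m) :
    ∃ p q, p < q ∧ Icc p q ⊆ Icc u v ∧
      ∀ t ∈ Ioo p q, ∃ s ∈ Icc u v, s ≠ t ∧ θ s = θ t := by
  obtain ⟨M, hM, hmax⟩ := isCompact_Icc.exists_isMaxOn ⟨m, hm⟩ hθ.continuousOn
  have hltM : θ u < θ M := hlt.trans_le (hmax hm)
  have hMv : M < v := lt_of_le_of_ne hM.2 (by rintro rfl; exact absurd huv hltM.ne)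
  have hev : ∀ᶠ t in nhds M, θ u < θ t ∧ t < v :=
    (hθ.continuousAt.eventually (lt_mem_nhds hltM)).and (gt_mem_nhds hMv)
  obtain ⟨ε, hε, hball⟩ := Metric.eventually_nhds_iff.1 hev
  have hb : ∀ t, M ≤ t → t < M + ε → θ u < θ t ∧ t < v := fun t h1 h2 =>
    hball (by rw [Real.dist_eq, abs_of_nonneg (by linarith)]; linarith)
  refine ⟨M, M + ε / 2, by linarith, fun t ht => ⟨hM.1.trans ht.1, ?_⟩, fun t ht => ?_⟩
  · exact (hb t ht.1 (by linarith [ht.2])).2.le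
  · have h1 := hb t ht.1.le (by linarith [ht.2])
    have hle : θ t ≤ θ M := hmax ⟨hM.1.trans ht.1.le, h1.2.le⟩
    obtain ⟨s, hs, hst⟩ := intermediate_value_Icc hM.1 hθ.continuousOn ⟨h1.1.le, hle⟩
    exact ⟨s, ⟨hs.1, hs.2.trans hM.2⟩, (hs.2.trans_lt ht.1).ne, hst⟩

lemma HasIsolatedZerosOn.exists_ne_zero {f : ℝ → ℝ} {a b : ℝ}
    (hf : HasIsolatedZerosOn f (Icc a b)) {p q : ℝ} (hpq : p < q) (hp : a ≤ p) (hq : q ≤ b) :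
    ∃ t ∈ Ioo p q, f t ≠ 0 := by
  by_contra! hcon
  have hm : (p + q) / 2 ∈ Ioo p q := ⟨by linarith, by linarith⟩
  obtain ⟨ε, hε, hiso⟩ := hf ((p + q) / 2) ⟨by linarith [hm.1], by linarith [hm.2]⟩ (hcon _ hm)
  set δ := min (ε / 2) ((q - p) / 4) with hδ
  have hδ0 : 0 < δ := lt_min (by linarith) (by linarith)
  have h1 : δ ≤ ε / 2 := min_le_left _ _
  have h2 : δ ≤ (q - p) / 4 := min_le_right _ _
  refine hiso ((p + q) / 2 + δ) ⟨by linarith, by linarith⟩ (by linarith) ?_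
    (hcon _ ⟨by linarith, by linarith⟩)
  rw [add_sub_cancel_left, abs_of_pos hδ0]; linarith

lemma nonneg_Icc_of_nonneg_Ioo {f : ℝ → ℝ} (hf : Continuous f) {a b : ℝ} (hab : a < b)
    (h : ∀ t ∈ Ioo a b, 0 ≤ f t) : ∀ t ∈ Icc a b, 0 ≤ f t := by
  intro t ht
  rw [← closure_Ioo hab.ne] at ht
  exact closure_minimal h (isClosed_le continuous_const hf) ht

namespace PlaneFrame

variable {a b : ℝ} {x y β ℓ θ : ℝ → ℝ}

/-- A repeated value of `θ` gives an interval on which every value of `θ` is repeated, so on which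
`ℓ` vanishes, against the isolation of its zeros. -/
lemma theta_injOn (h : PlaneFrame a b x y β ℓ θ)
    (hinj : ∀ s t, a ≤ s → s < t → t ≤ b → x s = x t → y s = y t → s = a ∧ t = b)
    (hiso : HasIsolatedZerosOn ℓ (Icc a b))
    (hconv : ∀ s ∈ Icc a b, ∀ t ∈ Icc a b, 0 ≤ sideFn x y θ s t) : InjOn θ (Ioo a b) := by
  have key : ∀ {s t}, s ∈ Ioo a b → t ∈ Ioo a b → s ≠ t → θ s = θ t → ℓ t = 0 := by
    intro s t hs ht hst hθ
    refine h.ell_eq_zero_of_theta_eq hconv (Ioo_subset_Icc_self hs) ht ?_ hθ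
    by_contra! hcon
    rcases lt_or_gt_of_ne hst with hlt | hlt
    · exact hs.1.ne' (hinj s t hs.1.le hlt ht.2.le hcon.1 hcon.2).1
    · exact ht.1.ne' (hinj t s ht.1.le hlt hs.2.le hcon.1.symm hcon.2.symm).1
  have main : ∀ u v, u ∈ Ioo a b → v ∈ Ioo a b → u < v → θ u ≠ θ v := by
    intro u v hu hv huv hθ
    have hsub : Icc u v ⊆ Ioo a b := fun t ht => ⟨hu.1.trans_le ht.1, ht.2.trans_lt hv.2⟩
    obtain ⟨p, q, hpq, hpqs, htw⟩ : ∃ p q, p < q ∧ Icc p q ⊆ Icc u v ∧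
        ∀ t ∈ Ioo p q, ∃ s ∈ Icc u v, s ≠ t ∧ θ s = θ t := by
      by_cases hc : ∃ m ∈ Icc u v, θ m ≠ θ u
      · obtain ⟨m, hm, hne⟩ := hc
        rcases lt_or_gt_of_ne hne with hlt | hlt
        · simpa using exists_interval_levels_attained_twice (θ := fun t => -θ t)
            h.cont_theta.neg (by simpa using hθ) hm (by simpa using hlt)
        · exact exists_interval_levels_attained_twice h.cont_theta hθ hm hlt
      · push Not at hc
        exact ⟨u, v, huv, subset_rfl, fun t ht => ⟨u, left_mem_Icc.2 huv.le, ht.1.ne,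
          (hc t (Ioo_subset_Icc_self ht)).symm⟩⟩
    have hp := hsub (hpqs (left_mem_Icc.2 hpq.le))
    have hq := hsub (hpqs (right_mem_Icc.2 hpq.le))
    obtain ⟨t, ht, hne⟩ := hiso.exists_ne_zero hpq hp.1.le hq.2.le
    obtain ⟨s, hs, hst, hs'⟩ := htw t ht
    exact hne (key (hsub hs) (hsub (hpqs (Ioo_subset_Icc_self ht))) hst hs')
  intro u hu v hv huv
  by_contra hne
  rcases lt_or_gt_of_ne hne with hlt | hlt
  · exact main u v hu hv hlt huv
  · exact main v u hv hu hlt huv.symm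

lemma theta_strictMono_or_anti (h : PlaneFrame a b x y β ℓ θ) (hab : a < b)
    (hθ : InjOn θ (Ioo a b)) :
    StrictMonoOn θ (Ioo a b) ∨ StrictMonoOn (-θ) (Ioo a b) := by
  rcases h.cont_theta.continuousOn.strictMonoOn_of_injOn_Ioo hab hθ with h1 | h1
  · exact Or.inl h1
  · exact Or.inr h1.neg

lemma ell_nonneg (h : PlaneFrame a b x y β ℓ θ) (hab : a < b) (hθ : StrictMonoOn θ (Ioo a b)) :
    ∀ t ∈ Icc a b, 0 ≤ ℓ t := by
  refine nonneg_Icc_of_nonneg_Ioo h.cont_ell hab fun t ht => ?_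
  have hacc : AccPt t (Filter.principal (Ioo a b)) :=
    (PerfectSpace.univ_preperfect (α := ℝ) t (mem_univ t)).nhds_inter (Ioo_mem_nhds ht.1 ht.2)
      |>.mono (Filter.principal_mono.2 (by simp))
  exact (h.deriv_theta t).hasDerivWithinAt.nonneg_of_monotoneOn hacc hθ.monotoneOn

/-- If `β t > 0` with `θ` increasing, the curve passes to the negative side of its tangent at `t`
immediately after `t`. -/
lemma beta_nonpos (h : PlaneFrame a b x y β ℓ θ) (hab : a < b) (hθ : StrictMonoOn θ (Ioo a b))
    (hconv : ∀ s ∈ Icc a b, ∀ t ∈ Icc a b, 0 ≤ sideFn x y θ s t) :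
    ∀ t ∈ Icc a b, β t ≤ 0 := by
  suffices H : ∀ t ∈ Ioo a b, 0 ≤ -β t from fun t ht =>
    neg_nonneg.1 (nonneg_Icc_of_nonneg_Ioo h.cont_beta.neg hab H t ht)
  intro t ht
  by_contra! hcon
  have hpos : 0 < β t := by linarith
  have hev : ∀ᶠ s in nhds t, 0 < β s ∧ θ s < θ t + π ∧ s < b :=
    (h.cont_beta.continuousAt.eventually (lt_mem_nhds hpos)).and
      ((h.cont_theta.continuousAt.eventually (gt_mem_nhds (by linarith [pi_pos]))).and
        (gt_mem_nhds ht.2))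
  obtain ⟨ε, hε, hball⟩ := Metric.eventually_nhds_iff.1 hev
  have hb : ∀ s, t ≤ s → s < t + ε → 0 < β s ∧ θ s < θ t + π ∧ s < b := fun s h1 h2 =>
    hball (by rw [Real.dist_eq, abs_of_nonneg (by linarith)]; linarith)
  have hmem : ∀ s ∈ Icc t (t + ε / 2), s ∈ Icc a b := fun s hs =>
    ⟨ht.1.le.trans hs.1, (hb s hs.1 (by linarith [hs.2])).2.2.le⟩
  have hanti : StrictAntiOn (fun s => sideFn x y θ s t) (Icc t (t + ε / 2)) := by
    refine strictAntiOn_of_deriv_neg (convex_Icc _ _)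
      (fun s hs => (h.hasDerivAt_sideFn_left (hmem s hs) t).continuousAt.continuousWithinAt) ?_
    intro s hs
    rw [(h.hasDerivAt_sideFn_left (hmem s (interior_subset hs)) t).deriv]
    rw [interior_Icc] at hs
    have h1 := hb s hs.1.le (by linarith [hs.2])
    have h2 : θ t < θ s := hθ ht ⟨ht.1.trans hs.1, h1.2.2⟩ hs.1
    have h3 := sin_pos_of_pos_of_lt_pi (x := θ s - θ t) (by linarith) (by linarith [h1.2.1])
    have := mul_pos h1.1 h3
    linarith
  have hle : t ≤ t + ε / 2 := by linarith
  have h1 := hanti (left_mem_Icc.2 hle) (right_mem_Icc.2 hle) (by linarith)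
  have h2 := hconv (t + ε / 2) (hmem _ (right_mem_Icc.2 hle)) t (Ioo_subset_Icc_self ht)
  simp only [sideFn, sub_self, zero_mul] at h1 h2
  linarith

end PlaneFrame

/-! ### The theorem of turning tangents -/

/-- A continuous angle of a constant direction is constant: its values differ by multiples of `2π`. -/
lemma eq_of_exp_mul_I_const {f : ℝ → ℝ} (hf : Continuous f) {a b : ℝ} {w : ℂ}
    (h : ∀ t ∈ Icc a b, Complex.exp (f t * Complex.I) = w) {s t : ℝ}
    (hs : s ∈ Icc a b) (ht : t ∈ Icc a b) : f s = f t := by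
  have hsub : f '' Icc a b ⊆ range (fun n : ℤ => f s + n * (2 * π)) := by
    rintro _ ⟨u, hu, rfl⟩
    obtain ⟨n, hn⟩ := Complex.exp_eq_exp_iff_exists_int.1 ((h u hu).trans (h s hs).symm)
    refine ⟨n, ?_⟩
    have := congrArg Complex.im hn
    simpa using this.symm
  exact ((countable_range _).mono hsub).isTotallyDisconnected _ subset_rfl
    (isPreconnected_Icc.image f hf.continuousOn) ⟨s, hs, rfl⟩ ⟨t, ht, rfl⟩

/-- A continuous angle that keeps its direction in the closed upper half plane varies by at most
`π`, since `sin ≥ 0` holds on no longer interval. -/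
lemma abs_sub_le_pi_of_sin_nonneg {f : ℝ → ℝ} (hf : Continuous f) {p q : ℝ} (hpq : p ≤ q)
    (h : ∀ t ∈ Ioo p q, 0 ≤ sin (f t)) : |f q - f p| ≤ π := by
  rcases hpq.eq_or_lt with rfl | hlt
  · simpa using pi_pos.le
  have h' : ∀ t ∈ Icc p q, 0 ≤ sin (f t) := by
    intro t ht
    rw [← closure_Ioo hlt.ne] at ht
    exact closure_minimal h (isClosed_le continuous_const (continuous_sin.comp hf)) ht
  have hval : ∀ v ∈ uIcc (f p) (f q), 0 ≤ sin v := by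
    intro v hv
    obtain ⟨t, ht, rfl⟩ := intermediate_value_uIcc hf.continuousOn hv
    rw [uIcc_of_le hpq] at ht
    exact h' t ht
  have aux : ∀ u v : ℝ, (∀ w ∈ Icc u v, 0 ≤ sin w) → v - u ≤ π := by
    intro u v huv
    by_contra! hcon
    have hpi := pi_pos
    set δ := min (v - u - π) 1 with hδ
    have hδ0 : 0 < δ := lt_min (by linarith) one_pos
    have hδ1 : δ ≤ v - u - π := min_le_left _ _
    have hδ2 : δ ≤ 1 := min_le_right _ _
    have hz : ∀ w, u ≤ w → w ≤ u + δ → sin w = 0 := by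
      intro w h1 h2
      have h3 := huv w ⟨h1, by linarith⟩
      have h4 := huv (w + π) ⟨by linarith, by linarith⟩
      rw [sin_add_pi] at h4
      linarith
    have h1 := hz u le_rfl (by linarith)
    have h2 := hz (u + δ) (by linarith) le_rfl
    rw [sin_add, h1, zero_mul, zero_add] at h2
    have h3 : 0 < sin δ := sin_pos_of_pos_of_lt_pi hδ0 (by linarith [pi_gt_three])
    have h4 := (mul_eq_zero.1 h2).resolve_right h3.ne'
    have := sin_sq_add_cos_sq u
    rw [h1, h4] at this
    norm_num at this
  rcases le_total (f p) (f q) with hle | hle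
  · rw [abs_of_nonneg (by linarith)]
    exact aux _ _ fun w hw => hval w (by rwa [uIcc_of_le hle])
  · rw [abs_sub_comm, abs_of_nonneg (by linarith)]
    exact aux _ _ fun w hw => hval w (by rwa [uIcc_of_ge hle])

lemma abs_sub_le_pi_of_sin_nonpos {f : ℝ → ℝ} (hf : Continuous f) {p q : ℝ} (hpq : p ≤ q)
    (h : ∀ t ∈ Ioo p q, sin (f t) ≤ 0) : |f q - f p| ≤ π := by
  have := abs_sub_le_pi_of_sin_nonneg hf.neg hpq (fun t ht => by simpa using h t ht)
  rw [abs_sub_comm]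
  convert this using 2
  simp only [Pi.neg_apply]; ring

/-- The parameters `(s, t)` of the chords of a curve on `[a, b]`: the triangle
`a ≤ s ≤ t ≤ b`. -/
def chordTriangle (a b : ℝ) : Set (ℝ × ℝ) := {p | a ≤ p.1 ∧ p.1 ≤ p.2 ∧ p.2 ≤ b}

/-- A nonvanishing continuous function on the triangle has a continuous logarithm: it extends to
the plane through a retraction, and then lifts along the covering `exp`. -/
lemma exists_angle_on_triangle {a b : ℝ} (hab : a ≤ b) {G : ℝ × ℝ → ℂ}
    (hG : ContinuousOn G (chordTriangle a b)) (h0 : ∀ p ∈ chordTriangle a b, G p ≠ 0) :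
    ∃ H : ℝ × ℝ → ℂ, Continuous H ∧ ∀ p ∈ chordTriangle a b, Complex.exp (H p) = G p := by
  -- retraction of the plane onto the triangle
  set r : ℝ × ℝ → ℝ × ℝ := fun p =>
    (max a (min p.1 (max a (min p.2 b))), max a (min p.2 b)) with hr
  have hrc : Continuous r := by fun_prop
  have hrT : ∀ p, r p ∈ chordTriangle a b := fun p =>
    ⟨le_max_left _ _, max_le (le_max_left _ _) (min_le_right _ _), max_le hab (min_le_right _ _)⟩
  have hrid : ∀ p ∈ chordTriangle a b, r p = p := by
    rintro ⟨s, t⟩ ⟨h1, h2, h3⟩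
    simp only at h1 h2 h3
    simp [hr, h1, h2, h3, h1.trans h2]
  let F : C(ℝ × ℝ, ℂ) := ⟨fun p => G (r p), hG.comp_continuous hrc hrT⟩
  have hF : ∀ p, F p ∈ ({0}ᶜ : Set ℂ) := fun p => h0 _ (hrT p)
  obtain ⟨H, ⟨-, hH⟩, -⟩ := Complex.isCoveringMapOn_exp.existsUnique_continuousMap_lifts F
    (a₀ := (0, 0)) (Complex.exp_log (hF _)) hF
  refine ⟨H, H.continuous, fun p hp => ?_⟩
  have := congrFun hH p
  simp only [Function.comp_apply] at this
  rw [this]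
  show G (r p) = G p
  rw [hrid p hp]

section Umlaufsatz

variable {a b : ℝ} {g : ℝ → ℂ} {P β : ℝ → ℝ} {E : ℝ → ℂ}

/-- A mean value estimate: if the unit tangent `E` stays `ε`-close to `v`, then the chord is
`ε`-close to `v` relative to the arc length `P t - P s`. -/
lemma norm_chord_sub_le {s t : ℝ} (hst : s ≤ t) (v : ℂ) {ε : ℝ}
    (hg : ∀ u ∈ Icc s t, HasDerivAt g (β u * E u) u)
    (hP : ∀ u ∈ Icc s t, HasDerivAt P (β u) u) (hβ : ∀ u ∈ Icc s t, 0 ≤ β u)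
    (hE : ∀ u ∈ Icc s t, ‖E u - v‖ ≤ ε) :
    ‖(g t - g s) - ((P t - P s : ℝ) : ℂ) * v‖ ≤ ε * (P t - P s) := by
  have hd : ∀ u ∈ Icc s t, HasDerivAt (fun u => (g u - g s) - ((P u - P s : ℝ) : ℂ) * v)
      (β u * (E u - v)) u := fun u hu =>
    (((hg u hu).sub_const (g s)).sub
      ((((hP u hu).sub_const (P s)).ofReal_comp).mul_const v)).congr_deriv (by ring)
  have hd2 : ∀ u ∈ Icc s t, HasDerivAt (fun u => ε * (P u - P s)) (ε * β u) u := fun u hu =>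
    ((hP u hu).sub_const (P s)).const_mul ε
  refine image_norm_le_of_norm_deriv_right_le_deriv_boundary'
    (f := fun u => (g u - g s) - ((P u - P s : ℝ) : ℂ) * v)
    (f' := fun u => β u * (E u - v)) (B := fun u => ε * (P u - P s)) (B' := fun u => ε * β u)
    (fun u hu => (hd u hu).continuousAt.continuousWithinAt)
    (fun u hu => (hd u (Ico_subset_Icc_self hu)).hasDerivWithinAt) (by simp)
    (fun u hu => (hd2 u hu).continuousAt.continuousWithinAt)
    (fun u hu => (hd2 u (Ico_subset_Icc_self hu)).hasDerivWithinAt) (fun u hu => ?_)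
    (right_mem_Icc.2 hst)
  have hu' := Ico_subset_Icc_self hu
  rw [norm_mul, Complex.norm_real, Real.norm_of_nonneg (hβ u hu'), mul_comm]
  exact mul_le_mul_of_nonneg_right (hE u hu') (hβ u hu')

open Classical in
/-- The secant map of a closed curve `g` with tangent `E` and arc length `P`. Off the diagonal it
is the chord divided by the lengths of the two arcs it cuts off, so that it extends continuously
by `E t / L` to the diagonal and by `-E a / L` to the corner `(a, b)`, where `L = P b - P a`. -/
def chordMap (a b : ℝ) (g : ℝ → ℂ) (P : ℝ → ℝ) (E : ℝ → ℂ) (p : ℝ × ℝ) : ℂ :=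
  if p.1 = p.2 then E p.1 * ((P b - P a : ℝ) : ℂ)⁻¹
  else if p = (a, b) then -E a * ((P b - P a : ℝ) : ℂ)⁻¹
  else (g p.2 - g p.1) *
    (((P p.2 - P p.1 : ℝ) : ℂ)⁻¹ * ((P b - P a - (P p.2 - P p.1) : ℝ) : ℂ)⁻¹)

lemma continuousOn_chordMap (hab : a < b)
    (hg : ∀ t ∈ Icc a b, HasDerivAt g (β t * E t) t)
    (hP : ∀ t ∈ Icc a b, HasDerivAt P (β t) t) (hβ : ∀ t ∈ Icc a b, 0 ≤ β t)
    (hmono : StrictMonoOn P (Icc a b)) (hE : Continuous E) (hEab : E a = E b)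
    (hgab : g a = g b) :
    ContinuousOn (chordMap a b g P E) (chordTriangle a b) := by
  have hA : a ∈ Icc a b := left_mem_Icc.2 hab.le
  have hB : b ∈ Icc a b := right_mem_Icc.2 hab.le
  have hL : 0 < P b - P a := sub_pos.2 (hmono hA hB hab)
  have hgc : ∀ t ∈ Icc a b, ContinuousAt g t := fun t ht => (hg t ht).continuousAt
  have hPc : ∀ t ∈ Icc a b, ContinuousAt P t := fun t ht => (hP t ht).continuousAt
  rintro ⟨c, d⟩ ⟨hac, hcd, hdb⟩
  simp only at hac hcd hdb
  have hc : c ∈ Icc a b := ⟨hac, hcd.trans hdb⟩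
  have hd : d ∈ Icc a b := ⟨hac.trans hcd, hdb⟩
  have hfst : ContinuousAt (fun p : ℝ × ℝ => P p.1) (c, d) :=
    ContinuousAt.comp (f := Prod.fst) (hPc c hc) continuousAt_fst
  have hsnd : ContinuousAt (fun p : ℝ × ℝ => P p.2) (c, d) :=
    ContinuousAt.comp (f := Prod.snd) (hPc d hd) continuousAt_snd
  have hB1 : ContinuousAt (fun p : ℝ × ℝ => ((P p.2 - P p.1 : ℝ) : ℂ)) (c, d) :=
    Complex.continuous_ofReal.continuousAt.comp (hsnd.sub hfst)
  have hB2 : ContinuousAt (fun p : ℝ × ℝ => ((P b - P a - (P p.2 - P p.1) : ℝ) : ℂ)) (c, d) :=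
    Complex.continuous_ofReal.continuousAt.comp (continuousAt_const.sub (hsnd.sub hfst))
  by_cases hdiag : c = d
  · subst hdiag
    -- near the diagonal the mean tangent is close to the tangent
    let A : ℝ × ℝ → ℂ := fun p => if p.1 = p.2 then E p.1 else
      (g p.2 - g p.1) * ((P p.2 - P p.1 : ℝ) : ℂ)⁻¹
    have hAc : ContinuousWithinAt A (chordTriangle a b) (c, c) := by
      rw [Metric.continuousWithinAt_iff]
      intro ε hε
      obtain ⟨δ, hδ, hball⟩ := Metric.continuousAt_iff.1
        (hE.continuousAt (x := c)) (ε / 2) (half_pos hε)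
      refine ⟨δ, hδ, ?_⟩
      rintro ⟨s, t⟩ ⟨hs, hst, ht⟩ hdist
      simp only at hs hst ht
      rw [Prod.dist_eq, max_lt_iff] at hdist
      simp only [Real.dist_eq, abs_lt] at hdist
      have hAcc : A (c, c) = E c := by simp [A]
      have hnear : ∀ u ∈ Icc s t, ‖E u - E c‖ ≤ ε / 2 := fun u hu => by
        rw [← dist_eq_norm]
        refine (hball ?_).le
        rw [Real.dist_eq, abs_lt]
        exact ⟨by linarith [hu.1, hdist.1.1], by linarith [hu.2, hdist.2.2]⟩
      rw [hAcc, dist_eq_norm]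
      refine lt_of_le_of_lt ?_ (half_lt_self hε)
      by_cases hst' : s = t
      · subst hst'
        simpa [A] using hnear s (left_mem_Icc.2 le_rfl)
      · have hlt : s < t := lt_of_le_of_ne hst hst'
        have hsub : Icc s t ⊆ Icc a b := Icc_subset_Icc hs ht
        have hpos : 0 < P t - P s :=
          sub_pos.2 (hmono (hsub (left_mem_Icc.2 hst)) (hsub (right_mem_Icc.2 hst)) hlt)
        have hne : ((P t - P s : ℝ) : ℂ) ≠ 0 := Complex.ofReal_ne_zero.2 hpos.ne'
        have hle := norm_chord_sub_le hst (E c) (fun u hu => hg u (hsub hu))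
          (fun u hu => hP u (hsub hu)) (fun u hu => hβ u (hsub hu)) hnear
        have heq : A (s, t) - E c =
            ((g t - g s) - ((P t - P s : ℝ) : ℂ) * E c) * ((P t - P s : ℝ) : ℂ)⁻¹ := by
          simp only [A, hst', if_false]
          field_simp
        rw [heq, norm_mul, norm_inv, Complex.norm_real, Real.norm_of_nonneg hpos.le]
        rwa [← div_eq_mul_inv, div_le_iff₀ hpos]
    have hcont := hAc.mul ((hB2.inv₀
      (by simpa using (Complex.ofReal_ne_zero.2 hL.ne'))).continuousWithinAt (s := chordTriangle a b))
    have hne : (c, c) ≠ (a, b) := by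
      intro h; rw [Prod.mk.injEq] at h; linarith [h.1, h.2]
    have heq : ∀ p : ℝ × ℝ, p ≠ (a, b) → chordMap a b g P E p =
        A p * ((P b - P a - (P p.2 - P p.1) : ℝ) : ℂ)⁻¹ := by
      rintro ⟨s, t⟩ hp
      by_cases hst : s = t
      · subst hst; simp [chordMap, A]
      · simp only [chordMap, A, hst, hp, if_false]; ring
    refine hcont.congr_of_eventuallyEq ?_ (heq _ hne)
    exact Filter.Eventually.filter_mono nhdsWithin_le_nhds
      (Filter.mem_of_superset (isOpen_ne.mem_nhds hne) fun p hp => heq p hp)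
  by_cases hcor : (c, d) = (a, b)
  · rw [Prod.mk.injEq] at hcor
    obtain ⟨rfl, rfl⟩ := hcor
    -- near the corner the complementary arc is short
    let A : ℝ × ℝ → ℂ := fun p => if p = (c, d) then -E c else
      (g p.2 - g p.1) * ((P d - P c - (P p.2 - P p.1) : ℝ) : ℂ)⁻¹
    have hAc : ContinuousWithinAt A (chordTriangle c d) (c, d) := by
      rw [Metric.continuousWithinAt_iff]
      intro ε hε
      obtain ⟨δ, hδ, hball⟩ := Metric.continuousAt_iff.1
        (hE.continuousAt (x := c)) (ε / 2) (half_pos hε)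
      obtain ⟨δ', hδ', hball'⟩ := Metric.continuousAt_iff.1
        (hE.continuousAt (x := d)) (ε / 2) (half_pos hε)
      refine ⟨min δ δ', lt_min hδ hδ', ?_⟩
      rintro ⟨s, t⟩ ⟨hs, hst, ht⟩ hdist
      simp only at hs hst ht
      rw [Prod.dist_eq, max_lt_iff, lt_min_iff, lt_min_iff] at hdist
      simp only [Real.dist_eq, abs_lt] at hdist
      have hAcc : A (c, d) = -E c := by simp [A]
      rw [hAcc, dist_eq_norm]
      refine lt_of_le_of_lt ?_ (half_lt_self hε)
      by_cases hst' : (s, t) = (c, d)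
      · rw [hst', hAcc, sub_self, norm_zero]; linarith
      · have hn1 : ∀ u ∈ Icc c s, ‖E u - E c‖ ≤ ε / 2 := fun u hu => by
          rw [← dist_eq_norm]
          refine (hball ?_).le
          rw [Real.dist_eq, abs_lt]
          exact ⟨by linarith [hu.1, hdist.1.1], by linarith [hu.2, hdist.1.1]⟩
        have hn2 : ∀ u ∈ Icc t d, ‖E u - E c‖ ≤ ε / 2 := fun u hu => by
          rw [hEab, ← dist_eq_norm]
          refine (hball' ?_).le
          rw [Real.dist_eq, abs_lt]
          exact ⟨by linarith [hu.1, hdist.2.2], by linarith [hu.2, hdist.2.2]⟩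
        have hs1 : Icc c s ⊆ Icc c d := Icc_subset_Icc le_rfl (hst.trans ht)
        have hs2 : Icc t d ⊆ Icc c d := Icc_subset_Icc (hs.trans hst) le_rfl
        have hle1 := norm_chord_sub_le hs (E c) (fun u hu => hg u (hs1 hu))
          (fun u hu => hP u (hs1 hu)) (fun u hu => hβ u (hs1 hu)) hn1
        have hle2 := norm_chord_sub_le ht (E c) (fun u hu => hg u (hs2 hu))
          (fun u hu => hP u (hs2 hu)) (fun u hu => hβ u (hs2 hu)) hn2
        have hsm : s ∈ Icc c d := hs1 (right_mem_Icc.2 hs)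
        have htm : t ∈ Icc c d := hs2 (left_mem_Icc.2 ht)
        have hpos : 0 < P d - P c - (P t - P s) := by
          have h1 := hmono.monotoneOn hA hsm hs
          have h2 := hmono.monotoneOn htm hB ht
          by_contra hcon
          refine hst' (Prod.ext ?_ ?_)
          · exact hmono.injOn hsm hA (by simp only; linarith)
          · exact hmono.injOn htm hB (by simp only; linarith)
        have hne : ((P d - P c - (P t - P s) : ℝ) : ℂ) ≠ 0 := Complex.ofReal_ne_zero.2 hpos.ne'
        have heq : A (s, t) - -E c =
            -(((g s - g c) - ((P s - P c : ℝ) : ℂ) * E c) +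
              ((g d - g t) - ((P d - P t : ℝ) : ℂ) * E c)) *
              ((P d - P c - (P t - P s) : ℝ) : ℂ)⁻¹ := by
          simp only [A, hst', if_false]
          rw [hgab]
          field_simp
          push_cast
          ring
        rw [heq, norm_mul, norm_inv, norm_neg, Complex.norm_real, Real.norm_of_nonneg hpos.le,
          ← div_eq_mul_inv, div_le_iff₀ hpos]
        refine (norm_add_le _ _).trans ((add_le_add hle1 hle2).trans (le_of_eq ?_))
        ring
    have hcont := hAc.mul ((hB1.inv₀ (Complex.ofReal_ne_zero.2 hL.ne')).continuousWithinAt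
      (s := chordTriangle c d))
    have heq : ∀ p : ℝ × ℝ, p.1 ≠ p.2 → chordMap c d g P E p =
        A p * ((P p.2 - P p.1 : ℝ) : ℂ)⁻¹ := by
      rintro ⟨s, t⟩ hp
      simp only at hp
      by_cases hst : (s, t) = (c, d)
      · rw [Prod.mk.injEq] at hst
        obtain ⟨rfl, rfl⟩ := hst
        simp [chordMap, A, hp]
      · simp only [chordMap, A, hst, hp, if_false]; ring
    refine hcont.congr_of_eventuallyEq ?_ (heq _ hdiag)
    exact Filter.Eventually.filter_mono nhdsWithin_le_nhds
      (Filter.mem_of_superset ((isOpen_ne_fun continuous_fst continuous_snd).mem_nhds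
        (show ((c, d) : ℝ × ℝ) ∈ {p : ℝ × ℝ | p.1 ≠ p.2} from hdiag)) fun p hp => heq p hp)
  · have hlt : c < d := lt_of_le_of_ne hcd hdiag
    have hpos : P d - P c ≠ 0 := (sub_pos.2 (hmono hc hd hlt)).ne'
    have hne : P b - P a - (P d - P c) ≠ 0 := by
      have h1 := hmono.monotoneOn hA hc hac
      have h2 := hmono.monotoneOn hd hB hdb
      intro hcon
      refine hcor (Prod.ext ?_ ?_)
      · exact hmono.injOn hc hA (by simp only; linarith)
      · exact hmono.injOn hd hB (by simp only; linarith)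
    have hg1 : ContinuousAt (fun p : ℝ × ℝ => g p.1) (c, d) :=
      ContinuousAt.comp (f := Prod.fst) (hgc c hc) continuousAt_fst
    have hg2 : ContinuousAt (fun p : ℝ × ℝ => g p.2) (c, d) :=
      ContinuousAt.comp (f := Prod.snd) (hgc d hd) continuousAt_snd
    have hcont := (hg2.sub hg1).mul ((hB1.inv₀ (Complex.ofReal_ne_zero.2 hpos)).mul
      (hB2.inv₀ (Complex.ofReal_ne_zero.2 hne)))
    refine (hcont.congr ?_).continuousWithinAt
    filter_upwards [(isOpen_ne_fun continuous_fst continuous_snd).mem_nhds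
        (show ((c, d) : ℝ × ℝ) ∈ {p : ℝ × ℝ | p.1 ≠ p.2} from hdiag),
      isOpen_ne.mem_nhds hcor] with p hp1 hp2
    simp only [chordMap, if_neg hp1, if_neg hp2]
    rfl

/-- The theorem of turning tangents (Hopf's Umlaufsatz) for a simple closed curve whose speed
`β ≥ 0` may vanish but whose tangent angle `θ` is continuous. The continuous argument `ψ` of the
secant map measures the turning of the tangent along the diagonal. Since `g a = g b`, the argument
`D s = ψ (s, b) - ψ (a, s)` between opposite chords is a constant odd multiple of `π`, and the
total turning is `D a + D b`. At a lowest point `c` all chords stay in a half plane, so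
`|D c| ≤ 2π`, hence `D = ±π`. -/
lemma umlaufsatz {θ : ℝ → ℝ} (hab : a < b) (hθ : Continuous θ)
    (hg : ∀ t ∈ Icc a b, HasDerivAt g (β t * Complex.exp (θ t * Complex.I)) t)
    (hP : ∀ t ∈ Icc a b, HasDerivAt P (β t) t) (hβ : ∀ t ∈ Icc a b, 0 ≤ β t)
    (hmono : StrictMonoOn P (Icc a b))
    (hEab : Complex.exp (θ a * Complex.I) = Complex.exp (θ b * Complex.I)) (hgab : g a = g b)
    (hinj : ∀ s t, a ≤ s → s < t → t ≤ b → g s = g t → s = a ∧ t = b) :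
    θ b - θ a = 2 * π ∨ θ b - θ a = -(2 * π) := by
  set E : ℝ → ℂ := fun t => Complex.exp (θ t * Complex.I) with hEdef
  have hE : Continuous E := by fun_prop
  have hA : a ∈ Icc a b := left_mem_Icc.2 hab.le
  have hB : b ∈ Icc a b := right_mem_Icc.2 hab.le
  have hL : 0 < P b - P a := sub_pos.2 (hmono hA hB hab)
  set G := chordMap a b g P E with hG
  have hGc : ContinuousOn G (chordTriangle a b) :=
    continuousOn_chordMap hab hg hP hβ hmono hE hEab hgab
  -- the three values of `G`, each a positive multiple of a direction
  have hdiag : ∀ t, G (t, t) = (((P b - P a)⁻¹ : ℝ) : ℂ) * E t := fun t => by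
    simp [hG, chordMap, mul_comm]
  have hcor : G (a, b) = -((((P b - P a)⁻¹ : ℝ) : ℂ) * E a) := by
    simp [hG, chordMap, hab.ne, mul_comm]
  have hchord : ∀ s t, a ≤ s → s < t → t ≤ b → (s, t) ≠ (a, b) →
      ∃ k : ℝ, 0 < k ∧ G (s, t) = (k : ℂ) * (g t - g s) := by
    intro s t hs hst ht hne
    have hsm : s ∈ Icc a b := ⟨hs, hst.le.trans ht⟩
    have htm : t ∈ Icc a b := ⟨hs.trans hst.le, ht⟩
    have hpos : 0 < P b - P a - (P t - P s) := by
      have h1 := hmono.monotoneOn hA hsm hs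
      have h2 := hmono.monotoneOn htm hB ht
      by_contra hcon
      refine hne (Prod.ext ?_ ?_)
      · exact hmono.injOn hsm hA (by simp only; linarith)
      · exact hmono.injOn htm hB (by simp only; linarith)
    refine ⟨(P t - P s)⁻¹ * (P b - P a - (P t - P s))⁻¹,
      mul_pos (inv_pos.2 (sub_pos.2 (hmono hsm htm hst))) (inv_pos.2 hpos), ?_⟩
    simp only [hG, chordMap, hst.ne, hne, if_false]
    push_cast; ring
  have hG0 : ∀ p ∈ chordTriangle a b, G p ≠ 0 := by
    rintro ⟨s, t⟩ ⟨hs, hst, ht⟩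
    simp only at hs hst ht
    have hne0 : (((P b - P a)⁻¹ : ℝ) : ℂ) ≠ 0 := Complex.ofReal_ne_zero.2 (inv_pos.2 hL).ne'
    rcases hst.eq_or_lt with rfl | hlt
    · rw [hdiag]; exact mul_ne_zero hne0 (Complex.exp_ne_zero _)
    by_cases hne : (s, t) = (a, b)
    · rw [hne, hcor]; exact neg_ne_zero.2 (mul_ne_zero hne0 (Complex.exp_ne_zero _))
    · obtain ⟨k, hk, hk'⟩ := hchord s t hs hlt ht hne
      rw [hk']
      refine mul_ne_zero (Complex.ofReal_ne_zero.2 hk.ne') (sub_ne_zero.2 fun h => hne ?_)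
      obtain ⟨h1, h2⟩ := hinj s t hs hlt ht h.symm
      rw [h1, h2]
  obtain ⟨H, hHc, hH⟩ := exists_angle_on_triangle hab.le hGc hG0
  set ψ : ℝ × ℝ → ℝ := fun p => (H p).im with hψ
  have hψc : Continuous ψ := Complex.continuous_im.comp hHc
  -- arguments of positive multiples
  have harg : ∀ z : ℂ, Complex.exp z = (Real.exp z.re : ℂ) * Complex.exp (z.im * Complex.I) := by
    intro z
    rw [Complex.ofReal_exp, ← Complex.exp_add, Complex.re_add_im]
  have hunit : ∀ {z w : ℝ} {r : ℝ} {c : ℂ}, ‖c‖ = 1 → 0 < r → Complex.exp (z * Complex.I) =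
      (r : ℂ) * (c * Complex.exp (w * Complex.I)) →
      Complex.exp ((z - w : ℝ) * Complex.I) = c := by
    intro z w r c hc hr h
    have hn := congrArg norm h
    rw [norm_mul, norm_mul, Complex.norm_exp_ofReal_mul_I, Complex.norm_exp_ofReal_mul_I, hc,
      Complex.norm_real, Real.norm_of_nonneg hr.le, mul_one, mul_one] at hn
    rw [← hn, Complex.ofReal_one, one_mul] at h
    rw [Complex.ofReal_sub, sub_mul, Complex.exp_sub, h,
      mul_div_cancel_right₀ _ (Complex.exp_ne_zero _)]
  -- along the diagonal, `ψ` is the tangent angle up to a constant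
  have hψθ : ∀ t ∈ Icc a b, Complex.exp ((ψ (t, t) - θ t : ℝ) * Complex.I) = 1 := by
    intro t ht
    have h1 := hH (t, t) ⟨ht.1, le_rfl, ht.2⟩
    rw [harg, hdiag] at h1
    have hne : (Real.exp (H (t, t)).re : ℂ) ≠ 0 := Complex.ofReal_ne_zero.2 (Real.exp_ne_zero _)
    refine hunit (r := (Real.exp (H (t, t)).re)⁻¹ * (P b - P a)⁻¹) norm_one
      (mul_pos (inv_pos.2 (Real.exp_pos _)) (inv_pos.2 hL)) ?_
    rw [one_mul, Complex.ofReal_mul, mul_assoc, ← h1, Complex.ofReal_inv, inv_mul_cancel_left₀ hne]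
  have htot : ψ (b, b) - ψ (a, a) = θ b - θ a := by
    have := eq_of_exp_mul_I_const (f := fun t => ψ (t, t) - θ t) (by fun_prop) hψθ hA hB
    linarith
  -- the chords `(a, s)` and `(s, b)` are opposite because `g a = g b`
  set D : ℝ → ℝ := fun s => ψ (s, b) - ψ (a, s) with hD
  have hDc : Continuous D := by fun_prop
  have hopp : ∀ s ∈ Icc a b, ∃ r : ℝ, 0 < r ∧ G (s, b) = (r : ℂ) * -G (a, s) := by
    intro s hs
    rcases hs.1.eq_or_lt with rfl | h1
    · exact ⟨1, one_pos, by rw [hcor, hdiag]; simp⟩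
    rcases hs.2.eq_or_lt with rfl | h2
    · exact ⟨1, one_pos, by
        have hEE : E a = E s := hEab
        rw [hcor, hdiag, ← hEE]; simp⟩
    obtain ⟨k, hk, hk'⟩ := hchord s b h1.le h2 le_rfl (by simp [h1.ne'])
    obtain ⟨l, hl, hl'⟩ := hchord a s le_rfl h1 h2.le (by simp [h2.ne])
    refine ⟨k / l, div_pos hk hl, ?_⟩
    have : (l : ℂ) ≠ 0 := Complex.ofReal_ne_zero.2 hl.ne'
    rw [hk', hl', hgab]
    push_cast
    field_simp
    ring
  have hDexp : ∀ s ∈ Icc a b, Complex.exp (D s * Complex.I) = -1 := by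
    intro s hs
    obtain ⟨r, hr, hr'⟩ := hopp s hs
    rw [← hH (s, b) ⟨hs.1, hs.2, le_rfl⟩, ← hH (a, s) ⟨le_rfl, hs.1, hs.2⟩, harg,
      harg (H (a, s))] at hr'
    have hne : (Real.exp (H (s, b)).re : ℂ) ≠ 0 := Complex.ofReal_ne_zero.2 (Real.exp_ne_zero _)
    refine hunit (r := (Real.exp (H (s, b)).re)⁻¹ * (r * Real.exp (H (a, s)).re)) (by simp)
      (mul_pos (inv_pos.2 (Real.exp_pos _)) (mul_pos hr (Real.exp_pos _))) ?_
    rw [← inv_mul_cancel_left₀ hne (Complex.exp ((ψ (s, b) : ℝ) * Complex.I)), hr']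
    push_cast
    ring
  -- at a lowest point both chord families stay in a half plane
  obtain ⟨c, hc, hcmin⟩ := isCompact_Icc.exists_isMinOn (nonempty_Icc.2 hab.le)
    (f := fun t => (g t).im)
    (fun t ht => (Complex.continuous_im.continuousAt.comp (hg t ht).continuousAt).continuousWithinAt)
  have himG : ∀ p ∈ chordTriangle a b, (G p).im = Real.exp (H p).re * sin (ψ p) := by
    intro p hp
    rw [← hH p hp, Complex.exp_im]
  have hup : |ψ (c, b) - ψ (c, c)| ≤ π := by
    refine abs_sub_le_pi_of_sin_nonneg (f := fun t => ψ (c, t)) (by fun_prop) hc.2 fun t ht => ?_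
    obtain ⟨k, hk, hk'⟩ := hchord c t hc.1 ht.1 ht.2.le (by simp [ht.2.ne])
    have h1 := himG (c, t) ⟨hc.1, ht.1.le, ht.2.le⟩
    have h2 : (g c).im ≤ (g t).im := hcmin ⟨hc.1.trans ht.1.le, ht.2.le⟩
    rw [hk', Complex.im_ofReal_mul, Complex.sub_im] at h1
    exact nonneg_of_mul_nonneg_right (h1 ▸ mul_nonneg hk.le (by linarith)) (Real.exp_pos _)
  have hdown : |ψ (c, c) - ψ (a, c)| ≤ π := by
    refine abs_sub_le_pi_of_sin_nonpos (f := fun s => ψ (s, c)) (by fun_prop) hc.1 fun s hs => ?_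
    obtain ⟨k, hk, hk'⟩ := hchord s c hs.1.le hs.2 hc.2 (by simp [hs.1.ne'])
    have h1 := himG (s, c) ⟨hs.1.le, hs.2.le, hc.2⟩
    have h2 : (g c).im ≤ (g s).im := hcmin ⟨hs.1.le, hs.2.le.trans hc.2⟩
    rw [hk', Complex.im_ofReal_mul, Complex.sub_im] at h1
    have h3 : Real.exp (H (s, c)).re * sin (ψ (s, c)) ≤ 0 :=
      h1 ▸ mul_nonpos_of_nonneg_of_nonpos hk.le (by linarith)
    exact nonpos_of_mul_nonpos_right h3 (Real.exp_pos _)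
  have hDa := eq_of_exp_mul_I_const hDc hDexp hA hc
  have hDb := eq_of_exp_mul_I_const hDc hDexp hB hc
  have hsum : D a + D b = θ b - θ a := by rw [← htot]; simp only [hD]; ring
  have hbound : |D c| ≤ 2 * π := by
    have : D c = (ψ (c, b) - ψ (c, c)) + (ψ (c, c) - ψ (a, c)) := by simp only [hD]; ring
    rw [this]
    exact (abs_add_le _ _).trans (by linarith)
  obtain ⟨n, hn⟩ := Complex.exp_eq_exp_iff_exists_int.1
    ((hDexp c hc).trans Complex.exp_pi_mul_I.symm)
  have hn' : D c = π + n * (2 * π) := by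
    have := congrArg Complex.im hn
    simpa using this
  rw [abs_le, hn'] at hbound
  have hpi := pi_pos
  have hn1 : n < 1 := by
    by_contra! hcon
    have : (1 : ℝ) ≤ n := by exact_mod_cast hcon
    nlinarith
  have hn2 : -2 < n := by
    by_contra! hcon
    have : (n : ℝ) ≤ -2 := by exact_mod_cast hcon
    nlinarith
  have hcases : n = 0 ∨ n = -1 := by omega
  rcases hcases with rfl | rfl
  · left; push_cast at hn'; linarith
  · right; push_cast at hn'; linarith

end Umlaufsatz

/-! ### Plane frames and Legendre curves -/

namespace PlaneFrame

variable {a b : ℝ} {x y β ℓ θ : ℝ → ℝ}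

/-- The tangent angle of a simple closed plane frame with `β ≥ 0` turns exactly once. The arc
length `∫ β` is strictly increasing because the zeros of `β` are isolated. -/
lemma total_angle (h : PlaneFrame a b x y β ℓ θ) (hab : a < b)
    (hx : x a = x b) (hy : y a = y b)
    (hθab : Complex.exp (θ a * Complex.I) = Complex.exp (θ b * Complex.I))
    (hinj : ∀ s t, a ≤ s → s < t → t ≤ b → x s = x t → y s = y t → s = a ∧ t = b)
    (hiso : HasIsolatedZerosOn β (Icc a b)) (hβ : ∀ t ∈ Icc a b, 0 ≤ β t) :
    θ b - θ a = 2 * π ∨ θ b - θ a = -(2 * π) := by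
  refine umlaufsatz (g := fun t => (x t : ℂ) + y t * Complex.I) (P := fun t => ∫ u in a..t, β u)
    hab h.cont_theta (fun t ht => ?_) (fun t _ => ?_) hβ ?_ hθab (by simp only [hx, hy]) ?_
  · refine ((h.deriv_x t ht).ofReal_comp.add
      ((h.deriv_y t ht).ofReal_comp.mul_const Complex.I)).congr_deriv ?_
    rw [Complex.exp_mul_I]
    push_cast
    ring
  · exact intervalIntegral.integral_hasDerivAt_right (h.cont_beta.intervalIntegrable _ _)
      h.cont_beta.aestronglyMeasurable.stronglyMeasurableAtFilter h.cont_beta.continuousAt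
  · intro s hs t ht hst
    have hadd := intervalIntegral.integral_add_adjacent_intervals
      (h.cont_beta.intervalIntegrable (μ := MeasureTheory.volume) a s)
      (h.cont_beta.intervalIntegrable s t)
    obtain ⟨c, hc, hne⟩ := hiso.exists_ne_zero hst hs.1 ht.2
    have hpos := intervalIntegral.integral_pos hst h.cont_beta.continuousOn
      (fun u hu => hβ u ⟨hs.1.trans hu.1.le, hu.2.trans ht.2⟩)
      ⟨c, Ioo_subset_Icc_self hc,
        (hβ c ⟨hs.1.trans hc.1.le, hc.2.le.trans ht.2⟩).lt_of_ne hne.symm⟩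
    simp only
    linarith
  · intro s t hs hst ht hg
    refine hinj s t hs hst ht ?_ ?_
    · simpa using congrArg Complex.re hg
    · simpa using congrArg Complex.im hg

/-- For `β ≥ 0` and `ℓ` of constant sign, a simple closed plane frame lies on one side of its
tangents. The sign of `ℓ` decides which of the two turning numbers occurs, and the reflection
`conj` exchanges them. -/
lemma sideFn_sign_of_beta_nonneg (h : PlaneFrame a b x y β ℓ θ) (hab : a < b)
    (hx : x a = x b) (hy : y a = y b)
    (hθab : Complex.exp (θ a * Complex.I) = Complex.exp (θ b * Complex.I))
    (hinj : ∀ s t, a ≤ s → s < t → t ≤ b → x s = x t → y s = y t → s = a ∧ t = b)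
    (hiso : HasIsolatedZerosOn β (Icc a b)) (hβ : ∀ t ∈ Icc a b, 0 ≤ β t)
    (hℓ : (∀ t ∈ Icc a b, 0 ≤ ℓ t) ∨ (∀ t ∈ Icc a b, ℓ t ≤ 0)) :
    (∀ s ∈ Icc a b, ∀ t ∈ Icc a b, 0 ≤ sideFn x y θ s t) ∨
      (∀ s ∈ Icc a b, ∀ t ∈ Icc a b, sideFn x y θ s t ≤ 0) := by
  have htot := h.total_angle hab hx hy hθab hinj hiso hβ
  have hpi := pi_pos
  rcases hℓ with hℓ | hℓ
  · have hθ := monotoneOn_of_hasDerivWithinAt_nonneg (convex_Icc a b) h.cont_theta.continuousOn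
      (fun u _ => (h.deriv_theta u).hasDerivWithinAt) (fun u hu => hℓ u (interior_subset hu))
      (left_mem_Icc.2 hab.le) (right_mem_Icc.2 hab.le) hab.le
    exact Or.inr (h.sideFn_nonpos hab hx hy hβ hℓ (by rcases htot with h1 | h1 <;> linarith))
  · have hθ := antitoneOn_of_hasDerivWithinAt_nonpos (convex_Icc a b) h.cont_theta.continuousOn
      (fun u _ => (h.deriv_theta u).hasDerivWithinAt) (fun u hu => hℓ u (interior_subset hu))
      (left_mem_Icc.2 hab.le) (right_mem_Icc.2 hab.le) hab.le
    have hc := h.conj.sideFn_nonpos hab hx (by simp [hy]) hβ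
      (fun t ht => neg_nonneg.2 (hℓ t ht))
      (by simp only [Pi.neg_apply]; rcases htot with h1 | h1 <;> linarith)
    refine Or.inl fun s hs t ht => ?_
    have := hc s hs t ht
    rw [sideFn_conj] at this
    linarith

/-- If the curve lies on the nonnegative side of every tangent, then `ℓ` and `β` have constant
and opposite signs. The case of decreasing `θ` is reduced to the increasing one by a reflection
followed by a half-turn, which together preserve `sideFn`. -/
lemma signs_of_sideFn_nonneg (h : PlaneFrame a b x y β ℓ θ) (hab : a < b)
    (hinj : ∀ s t, a ≤ s → s < t → t ≤ b → x s = x t → y s = y t → s = a ∧ t = b)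
    (hiso : HasIsolatedZerosOn ℓ (Icc a b))
    (hconv : ∀ s ∈ Icc a b, ∀ t ∈ Icc a b, 0 ≤ sideFn x y θ s t) :
    ((∀ t ∈ Icc a b, 0 ≤ ℓ t) ∧ (∀ t ∈ Icc a b, β t ≤ 0)) ∨
      ((∀ t ∈ Icc a b, ℓ t ≤ 0) ∧ (∀ t ∈ Icc a b, 0 ≤ β t)) := by
  rcases h.theta_strictMono_or_anti hab (h.theta_injOn hinj hiso hconv) with hθ | hθ
  · exact Or.inl ⟨h.ell_nonneg hab hθ, h.beta_nonpos hab hθ hconv⟩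
  · have hℓ := h.conj.ell_nonneg hab hθ
    have hβ := h.conj.neg.beta_nonpos hab hθ fun s hs t ht => by
      rw [sideFn_neg, sideFn_conj, neg_neg]; exact hconv s hs t ht
    exact Or.inr ⟨fun t ht => neg_nonneg.1 (hℓ t ht), fun t ht => neg_nonpos.1 (hβ t ht)⟩

end PlaneFrame

/-- A Legendre curve has a global angle function `θ` with `θ' = ℓ`, normal `ν = (sin θ, -cos θ)`
and hence tangent direction `μ = J ν = (cos θ, sin θ)`. -/
lemma IsLegendreCurve.exists_planeFrame {γ ν : ℝ → ℝ × ℝ} {a b : ℝ}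
    (hLeg : IsLegendreCurve γ ν (Icc a b)) :
    ∃ θ : ℝ → ℝ, PlaneFrame a b (fun t => (γ t).1) (fun t => (γ t).2) (betOf γ ν) (ellOf ν) θ ∧
      ∀ t, ν t = (sin (θ t), -cos (θ t)) := by
  have hγd : Differentiable ℝ γ := hLeg.smooth_base.differentiable (by simp)
  have hνd : Differentiable ℝ ν := hLeg.smooth_normal.differentiable (by simp)
  have hγ' : Continuous (deriv γ) := hLeg.smooth_base.continuous_deriv (by simp)
  have hν' : Continuous (deriv ν) := hLeg.smooth_normal.continuous_deriv (by simp)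
  have hνc : Continuous ν := hνd.continuous
  have hℓc : Continuous (ellOf ν) := by unfold ellOf dot Jrot; fun_prop
  have hβc : Continuous (betOf γ ν) := by unfold betOf dot Jrot; fun_prop
  have hunit : ∀ t, (ν t).1 ^ 2 + (ν t).2 ^ 2 = 1 := fun t =>
    (Real.sqrt_eq_one).1 (hLeg.unit_normal t)
  have h1 : ∀ t, HasDerivAt (fun t => (ν t).1) (deriv ν t).1 t := fun t =>
    (hνd t).hasDerivAt.fst
  have h2 : ∀ t, HasDerivAt (fun t => (ν t).2) (deriv ν t).2 t := fun t =>
    (hνd t).hasDerivAt.snd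
  have horth : ∀ t, (ν t).1 * (deriv ν t).1 + (ν t).2 * (deriv ν t).2 = 0 := fun t => by
    have hd := (((h1 t).pow 2).add ((h2 t).pow 2)).unique
      ((hasDerivAt_const t (1 : ℝ)).congr_of_eventuallyEq
        (Filter.Eventually.of_forall fun u => hunit u))
    simp at hd
    linarith
  have hn1 : ∀ t, (deriv ν t).1 = -(ellOf ν t * (ν t).2) := fun t => by
    simp only [ellOf, dot, Jrot]
    linear_combination (-(deriv ν t).1) * hunit t + (ν t).1 * horth t
  have hn2 : ∀ t, (deriv ν t).2 = ellOf ν t * (ν t).1 := fun t => by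
    simp only [ellOf, dot, Jrot]
    linear_combination (-(deriv ν t).2) * hunit t + (ν t).2 * horth t
  set z : ℂ := ⟨-(ν a).2, (ν a).1⟩ with hz
  have hznorm : ‖z‖ = 1 := by
    rw [Complex.norm_def, Complex.normSq_apply, Real.sqrt_eq_one]
    simp only [hz]
    linarith [hunit a]
  have hz0 : z ≠ 0 := norm_ne_zero_iff.1 (by rw [hznorm]; exact one_ne_zero)
  have hcos : cos z.arg = -(ν a).2 := by rw [Complex.cos_arg hz0, hznorm, div_one]
  have hsin : sin z.arg = (ν a).1 := by rw [Complex.sin_arg, hznorm, div_one]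
  set θ : ℝ → ℝ := fun t => z.arg + ∫ u in a..t, ellOf ν u with hθdef
  have hθ : ∀ t, HasDerivAt θ (ellOf ν t) t := fun t =>
    (intervalIntegral.integral_hasDerivAt_right (hℓc.intervalIntegrable _ _)
      hℓc.aestronglyMeasurable.stronglyMeasurableAtFilter hℓc.continuousAt).const_add _
  have hθa : θ a = z.arg := by simp [hθdef]
  -- the inner product of `ν` with `(sin θ, -cos θ)` is constant, equal to `1`
  have hN : ∀ t, (ν t).1 * sin (θ t) - (ν t).2 * cos (θ t) = 1 := fun t => by
    have hd : ∀ t, HasDerivAt (fun t => (ν t).1 * sin (θ t) - (ν t).2 * cos (θ t)) 0 t := fun t =>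
      (((h1 t).mul (hθ t).sin).sub ((h2 t).mul (hθ t).cos)).congr_deriv
        (by rw [hn1, hn2]; ring)
    have hc := is_const_of_deriv_eq_zero (fun t => (hd t).differentiableAt)
      (fun t => (hd t).deriv) t a
    refine hc.trans ?_
    rw [hθa, hsin, hcos]
    linarith [hunit a]
  have hν : ∀ t, (ν t).1 = sin (θ t) ∧ (ν t).2 = -cos (θ t) := fun t => by
    have hu := hunit t
    have hsc := sin_sq_add_cos_sq (θ t)
    have hsum : ((ν t).1 - sin (θ t)) ^ 2 + ((ν t).2 + cos (θ t)) ^ 2 = 0 := by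
      linear_combination hu + hsc - 2 * hN t
    constructor <;> nlinarith [sq_nonneg ((ν t).1 - sin (θ t)), sq_nonneg ((ν t).2 + cos (θ t))]
  have htan : ∀ t ∈ Icc a b, (deriv γ t).1 * sin (θ t) - (deriv γ t).2 * cos (θ t) = 0 :=
    fun t ht => by
      have := hLeg.tangent t ht
      rw [dot, (hν t).1, (hν t).2] at this
      linarith
  refine ⟨θ, ⟨hβc, hℓc, fun t ht => ?_, fun t ht => ?_, hθ⟩, fun t => Prod.ext (hν t).1 (hν t).2⟩
  · have hd : HasDerivAt (fun t => (γ t).1) (deriv γ t).1 t := (hγd t).hasDerivAt.fst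
    refine hd.congr_deriv ?_
    simp only [betOf, dot, Jrot, (hν t).1, (hν t).2]
    linear_combination (-(deriv γ t).1) * sin_sq_add_cos_sq (θ t) + sin (θ t) * htan t ht
  · have hd : HasDerivAt (fun t => (γ t).2) (deriv γ t).2 t := (hγd t).hasDerivAt.snd
    refine hd.congr_deriv ?_
    simp only [betOf, dot, Jrot, (hν t).1, (hν t).2]
    linear_combination (-(deriv γ t).2) * sin_sq_add_cos_sq (θ t) - cos (θ t) * htan t ht

lemma HasIsolatedZerosOn.congr {f g : ℝ → ℝ} {s : Set ℝ} (hf : HasIsolatedZerosOn f s)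
    (hfg : ∀ t ∈ s, f t = g t) : HasIsolatedZerosOn g s := by
  intro t ht h0
  obtain ⟨ε, hε, h⟩ := hf t ht ((hfg t ht).trans h0)
  exact ⟨ε, hε, fun u hu hne hlt => hfg u hu ▸ h u hu hne hlt⟩

lemma HasIsolatedZerosOn.neg {f : ℝ → ℝ} {s : Set ℝ} (hf : HasIsolatedZerosOn f s) :
    HasIsolatedZerosOn (-f) s := fun t ht h0 =>
  let ⟨ε, hε, h⟩ := hf t ht (neg_eq_zero.1 h0)
  ⟨ε, hε, fun u hu hne hlt => neg_ne_zero.2 (h u hu hne hlt)⟩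

/-- Theorem 2.5: a simple closed frontal whose curvature functions have
isolated zeros is convex iff `ℓ` and `β` each have a constant sign (in the weak sense). -/
theorem convex_frontal_iff_sign (a b : ℝ) (hab : a < b) (γ ν : ℝ → ℝ × ℝ)
    (ℓ β : ℝ → ℝ)
    (hLeg : IsLegendreCurve γ ν (Icc a b))
    (hcurv : IsCurvature γ ν ℓ β (Icc a b))
    (hclosed : IsClosedLegendreCurve γ ν a b)
    (hsimple : IsSimpleClosed γ a b)
    (hisoℓ : HasIsolatedZerosOn ℓ (Icc a b))
    (hisoβ : HasIsolatedZerosOn β (Icc a b)) :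
    IsConvexFrontal γ ν (Icc a b) ↔
      ((∀ t ∈ Icc a b, 0 ≤ ℓ t) ∧ (∀ t ∈ Icc a b, 0 ≤ β t)) ∨
      ((∀ t ∈ Icc a b, 0 ≤ ℓ t) ∧ (∀ t ∈ Icc a b, β t ≤ 0)) ∨
      ((∀ t ∈ Icc a b, ℓ t ≤ 0) ∧ (∀ t ∈ Icc a b, β t ≤ 0)) ∨
      ((∀ t ∈ Icc a b, ℓ t ≤ 0) ∧ (∀ t ∈ Icc a b, 0 ≤ β t)) := by
  obtain ⟨θ, h, hν⟩ := hLeg.exists_planeFrame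
  have hℓ : ∀ t ∈ Icc a b, ℓ t = ellOf ν t := fun t ht => (hcurv.2.2 t ht).1
  have hβ : ∀ t ∈ Icc a b, β t = betOf γ ν t := fun t ht => (hcurv.2.2 t ht).2
  have hside : ∀ s t, dot (γ s - γ t) (ν t) =
      sideFn (fun t => (γ t).1) (fun t => (γ t).2) θ s t := fun s t => by
    simp only [dot, hν, sideFn, Prod.fst_sub, Prod.snd_sub]; ring
  have hinj : ∀ s t, a ≤ s → s < t → t ≤ b → (γ s).1 = (γ t).1 → (γ s).2 = (γ t).2 →
      s = a ∧ t = b := fun s t hs hst ht h1 h2 => hsimple s t hs hst ht (Prod.ext h1 h2)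
  have hinj' : ∀ s t, a ≤ s → s < t → t ≤ b → -(γ s).1 = -(γ t).1 → -(γ s).2 = -(γ t).2 →
      s = a ∧ t = b := fun s t hs hst ht h1 h2 =>
    hinj s t hs hst ht (neg_injective h1) (neg_injective h2)
  have hisoℓ' := hisoℓ.congr hℓ
  have hisoβ' := hisoβ.congr hβ
  have hx : (γ a).1 = (γ b).1 := congrArg Prod.fst hclosed.1
  have hy : (γ a).2 = (γ b).2 := congrArg Prod.snd hclosed.1
  have hθab : Complex.exp (θ a * Complex.I) = Complex.exp (θ b * Complex.I) := by
    have hνab := hclosed.2.1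
    rw [hν a, hν b, Prod.mk.injEq] at hνab
    rw [Complex.exp_mul_I, Complex.exp_mul_I, ← Complex.ofReal_cos, ← Complex.ofReal_cos,
      ← Complex.ofReal_sin, ← Complex.ofReal_sin, hνab.1, neg_injective hνab.2]
  have sgn : ∀ {f g : ℝ → ℝ}, (∀ t ∈ Icc a b, f t = g t) →
      ((∀ t ∈ Icc a b, 0 ≤ f t) ↔ ∀ t ∈ Icc a b, 0 ≤ g t) ∧
      ((∀ t ∈ Icc a b, f t ≤ 0) ↔ ∀ t ∈ Icc a b, g t ≤ 0) := fun hfg =>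
    ⟨forall₂_congr fun t ht => by rw [hfg t ht], forall₂_congr fun t ht => by rw [hfg t ht]⟩
  rw [(sgn hℓ).1, (sgn hℓ).2, (sgn hβ).1, (sgn hβ).2]
  simp only [IsConvexFrontal, hside]
  constructor
  · rintro (hc | hc)
    · rcases h.signs_of_sideFn_nonneg hab hinj hisoℓ' hc with h1 | h1
      · exact Or.inr (Or.inl h1)
      · exact Or.inr (Or.inr (Or.inr h1))
    · have hc' := h.neg.signs_of_sideFn_nonneg hab hinj' hisoℓ' fun s hs t ht => by
        rw [PlaneFrame.sideFn_neg]; exact neg_nonneg.2 (hc s hs t ht)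
      rcases hc' with h1 | h1
      · exact Or.inl ⟨h1.1, fun t ht => neg_nonpos.1 (h1.2 t ht)⟩
      · exact Or.inr (Or.inr (Or.inl ⟨h1.1, fun t ht => neg_nonneg.1 (h1.2 t ht)⟩))
  · have hpos := h.sideFn_sign_of_beta_nonneg hab hx hy hθab hinj hisoβ'
    have hneg : (∀ t ∈ Icc a b, betOf γ ν t ≤ 0) → _ := fun hb =>
      h.neg.sideFn_sign_of_beta_nonneg hab (congrArg Neg.neg hx) (congrArg Neg.neg hy) hθab hinj'
        hisoβ'.neg fun t ht => neg_nonneg.2 (hb t ht)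
    simp only [PlaneFrame.sideFn_neg, neg_nonneg, neg_nonpos] at hneg
    rintro (⟨h1, h2⟩ | ⟨h1, h2⟩ | ⟨h1, h2⟩ | ⟨h1, h2⟩)
    · exact hpos h2 (Or.inl h1)
    · exact (hneg h2 (Or.inl h1)).symm
    · exact (hneg h2 (Or.inr h1)).symm
    · exact hpos h2 (Or.inr h1)
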